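/- Let n, s be positive integers with s ≤ n, U ∈ ℂ^{n×s} with U†U = I_s, P_x > 0, γ > 0, K = (P_x/s) U U†, σ²_{x_t} = [K]_{tt}, and let energy arrivals E_1,…,E_n ≥ 0 be given with E_tot = Σ_l E_l > 0. Suppose (1/P_x) Σ_{l=1}^t σ²_{x_l} ≤ (1/E_tot) Σ_{l=1}^t E_l for every t = 1,…,n. Then the uniform allocation a_t = E_tot/P_x satisfies the energy causality constraints Σ_{l=1}^t a_l σ²_{x_l} ≤ Σ_{l=1}^t E_l for all t and Σ_{l=1}^n a_l σ²_{x_l} = E_tot, and it minimizes the error: for every a' with a'_t ≥ 0 satisfying these constraints, tr[((s/P_x) I_s + γ U† diag(a'_t) U)⁻¹] ≥ tr[((s/P_x) I_s + γ U† diag(a_t) U)⁻¹] = P_x / (1 + γ E_tot/s). -/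

import Mathlib

open Matrix
open scoped ComplexOrder

/-!
For a positive definite `s × s` matrix `M`, taking `c = s / tr M` in
`0 ≤ tr ((M⁻¹ - c I) M (M⁻¹ - c I))` gives the arithmetic-harmonic mean inequality
`s² / tr M ≤ tr M⁻¹`, an equality when `M` is a multiple of the identity. The posterior precision
`M = (s / P_x) I + γ U† diag(a) U` has trace `(s / P_x) (s + γ ∑ a_t σ²_t)`, so the error of an
allocation is bounded below through the total energy it spends alone. The uniform allocation, for
which `U† U = I` makes `M` scalar, attains the bound.
-/

section TraceInverse

variable {ι K : Type*} [Fintype ι] [DecidableEq ι]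
  [Field K] [PartialOrder K] [StarRing K] [StarOrderedRing K] {M : Matrix ι ι K}

lemma two_mul_mul_card_sub_sq_mul_trace_le_trace_inv (hM : M.PosDef) {c : K}
    (hc : IsSelfAdjoint c) :
    2 * c * Fintype.card ι - c ^ 2 * M.trace ≤ M⁻¹.trace := by
  have hdet : IsUnit M.det := (isUnit_iff_isUnit_det M).mp hM.isUnit
  have hherm : (M⁻¹ - c • 1)ᴴ = M⁻¹ - c • 1 := by
    rw [conjTranspose_sub, hM.inv.isHermitian.eq, conjTranspose_smul, conjTranspose_one,
      hc.star_eq]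
  have hexpand : (M⁻¹ - c • 1)ᴴ * M * (M⁻¹ - c • 1) = M⁻¹ - (2 * c) • 1 + c ^ 2 • M := by
    rw [hherm]
    simp only [sub_mul, mul_sub, smul_mul_assoc, mul_smul_comm, one_mul, mul_one,
      nonsing_inv_mul M hdet, mul_nonsing_inv M hdet]
    module
  have hnonneg := (hM.posSemidef.conjTranspose_mul_mul_same (M⁻¹ - c • 1)).trace_nonneg
  rw [hexpand, trace_add, trace_sub, trace_smul, trace_smul, trace_one, smul_eq_mul,
    smul_eq_mul] at hnonneg
  rw [← sub_nonneg]
  convert hnonneg using 1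
  ring

lemma card_sq_div_trace_le_trace_inv [Nonempty ι] (hM : M.PosDef) :
    (Fintype.card ι : K) ^ 2 / M.trace ≤ M⁻¹.trace := by
  have htrace : M.trace ≠ 0 := hM.trace_pos.ne'
  have hself : IsSelfAdjoint (Fintype.card ι / M.trace : K) :=
    (IsSelfAdjoint.natCast _).div (.of_nonneg hM.trace_pos.le)
  convert two_mul_mul_card_sub_sq_mul_trace_le_trace_inv hM hself using 1
  field_simp
  ring

end TraceInverse

lemma trace_conjTranspose_mul_diagonal_mul {ι κ 𝕜 : Type*} [Fintype ι] [DecidableEq ι]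
    [Fintype κ] [RCLike 𝕜] (U : Matrix ι κ 𝕜) (d : ι → 𝕜) :
    (Uᴴ * diagonal d * U).trace = ∑ t, d t * ∑ k, (‖U t k‖ : 𝕜) ^ 2 := by
  rw [trace_mul_comm, ← Matrix.mul_assoc, trace]
  refine Finset.sum_congr rfl fun t _ => ?_
  rw [diag_apply, mul_diagonal, mul_apply, mul_comm]
  simp only [conjTranspose_apply, RCLike.star_def, RCLike.mul_conj]

section Precision

variable {ι κ 𝕜 : Type*} [Fintype ι] [DecidableEq ι] [DecidableEq κ] [RCLike 𝕜]
  {U : Matrix ι κ 𝕜} {c γ b : ℝ} {a : ι → ℝ}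

/-- The inverse of the error covariance when a parameter with prior precision `c • 1` is observed
through the rows of `U`, row `t` being transmitted with squared gain `a t` over a channel of inverse
noise variance `γ`. The mean squared error of the allocation `a` is the trace of the inverse of this
matrix. -/
noncomputable def posteriorPrecision (c γ : ℝ) (U : Matrix ι κ 𝕜) (a : ι → ℝ) : Matrix κ κ 𝕜 :=
  c • 1 + (γ : 𝕜) • (Uᴴ * diagonal (fun t => (a t : 𝕜)) * U)

lemma posteriorPrecision_const (hU : Uᴴ * U = 1) (c γ b : ℝ) :
    posteriorPrecision c γ U (fun _ => b) = ((c + γ * b : ℝ) : 𝕜) • 1 := by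
  rw [posteriorPrecision, ← smul_one_eq_diagonal, Matrix.mul_smul, Matrix.mul_one,
    Matrix.smul_mul, hU, smul_smul, RCLike.real_smul_eq_coe_smul (K := 𝕜), ← add_smul]
  push_cast
  rfl

lemma posDef_posteriorPrecision [Finite κ] (hc : 0 < c) (hγ : 0 ≤ γ) (ha : ∀ t, 0 ≤ a t) :
    (posteriorPrecision c γ U a).PosDef := by
  have := Fintype.ofFinite κ
  have hdiag : (diagonal fun t => (a t : 𝕜)).PosSemidef :=
    .diagonal fun t => RCLike.ofReal_nonneg.mpr (ha t)
  exact (PosDef.one.smul hc).add_posSemidef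
    ((hdiag.conjTranspose_mul_mul_same U).smul (RCLike.ofReal_nonneg.mpr hγ))

variable [Fintype κ]

lemma trace_inv_posteriorPrecision_const (hU : Uᴴ * U = 1) (h : c + γ * b ≠ 0) :
    (posteriorPrecision c γ U fun _ => b)⁻¹.trace = ((Fintype.card κ / (c + γ * b) : ℝ) : 𝕜) := by
  have hinv : (posteriorPrecision c γ U fun _ => b)⁻¹ = (((c + γ * b)⁻¹ : ℝ) : 𝕜) • 1 := by
    apply inv_eq_right_inv
    rw [posteriorPrecision_const hU, smul_mul_smul_comm, Matrix.mul_one, ← RCLike.ofReal_mul,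
      mul_inv_cancel₀ h, RCLike.ofReal_one, one_smul]
  rw [hinv, trace_smul, trace_one, smul_eq_mul, div_eq_inv_mul]
  push_cast
  rfl

lemma trace_posteriorPrecision (c γ : ℝ) (U : Matrix ι κ 𝕜) (a : ι → ℝ) :
    (posteriorPrecision c γ U a).trace =
      ((c * Fintype.card κ + γ * ∑ t, a t * ∑ k, ‖U t k‖ ^ 2 : ℝ) : 𝕜) := by
  rw [posteriorPrecision, trace_add, trace_smul, trace_smul, trace_one,
    trace_conjTranspose_mul_diagonal_mul, RCLike.real_smul_eq_coe_mul, smul_eq_mul]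
  push_cast
  rfl

lemma trace_inv_posteriorPrecision_const_le [Nonempty κ] (hU : Uᴴ * U = 1) (hc : 0 < c)
    (hγ : 0 ≤ γ) (ha : ∀ t, 0 ≤ a t)
    (hab : ∑ t, a t * ∑ k, ‖U t k‖ ^ 2 ≤ b * Fintype.card κ) :
    (posteriorPrecision c γ U fun _ => b)⁻¹.trace ≤ (posteriorPrecision c γ U a)⁻¹.trace := by
  set s := (Fintype.card κ : ℝ) with hs
  have hM := posDef_posteriorPrecision (U := U) hc hγ ha
  have htrace_le : (posteriorPrecision c γ U a).trace ≤ (((c + γ * b) * s : ℝ) : 𝕜) := by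
    rw [trace_posteriorPrecision, RCLike.ofReal_le_ofReal, add_mul, mul_assoc γ]
    gcongr
  have hne : (c + γ * b) * s ≠ 0 :=
    (RCLike.ofReal_pos.mp (hM.trace_pos.trans_le htrace_le)).ne'
  calc (posteriorPrecision c γ U fun _ => b)⁻¹.trace
      = (Fintype.card κ : 𝕜) ^ 2 / (((c + γ * b) * s : ℝ) : 𝕜) := by
        rw [trace_inv_posteriorPrecision_const hU (left_ne_zero_of_mul hne), ← hs,
          ← mul_div_mul_right s _ (right_ne_zero_of_mul hne), ← sq, hs]
        push_cast
        rfl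
    _ ≤ (Fintype.card κ : 𝕜) ^ 2 / (posteriorPrecision c γ U a).trace :=
        div_le_div_of_nonneg_left (by positivity) hM.trace_pos htrace_le
    _ ≤ (posteriorPrecision c γ U a)⁻¹.trace := card_sq_div_trace_le_trace_inv hM

end Precision

section Source

variable {ι κ 𝕜 : Type*} [Fintype κ] [RCLike 𝕜] {U : Matrix ι κ 𝕜}

/-- The variances `σ²_t = K_tt` of the flat-spectrum source `K = (P / s) U Uᴴ` of total power `P`,
where `s` is the number of columns of `U`. -/
noncomputable def sourceVariance (P : ℝ) (U : Matrix ι κ 𝕜) (t : ι) : ℝ :=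
  P / Fintype.card κ * ∑ k, ‖U t k‖ ^ 2

variable [Fintype ι]

lemma sum_mul_sourceVariance (P : ℝ) (U : Matrix ι κ 𝕜) (a : ι → ℝ) :
    ∑ t, a t * sourceVariance P U t = P / Fintype.card κ * ∑ t, a t * ∑ k, ‖U t k‖ ^ 2 := by
  simp only [sourceVariance, Finset.mul_sum, mul_left_comm]

variable [DecidableEq κ]

lemma sum_sum_norm_sq_of_conjTranspose_mul_self_eq_one (hU : Uᴴ * U = 1) :
    ∑ t, ∑ k, ‖U t k‖ ^ 2 = (Fintype.card κ : ℝ) := by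
  classical
  have h := trace_conjTranspose_mul_diagonal_mul U fun _ => 1
  simp only [diagonal_one, Matrix.mul_one, hU, trace_one, one_mul] at h
  exact_mod_cast h.symm

lemma sum_sourceVariance [Nonempty κ] (hU : Uᴴ * U = 1) (P : ℝ) :
    ∑ t, sourceVariance P U t = P := by
  simp only [sourceVariance, ← Finset.mul_sum,
    sum_sum_norm_sq_of_conjTranspose_mul_self_eq_one hU]
  exact div_mul_cancel₀ P (Nat.cast_ne_zero.mpr Fintype.card_ne_zero)

end Source

lemma sum_div_mul_le_sum {ι K : Type*} [Field K] [LinearOrder K] [IsStrictOrderedRing K]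
    {S : Finset ι} {f g : ι → K} {p q : K} (hq : 0 < q)
    (h : 1 / p * ∑ i ∈ S, f i ≤ 1 / q * ∑ i ∈ S, g i) :
    ∑ i ∈ S, q / p * f i ≤ ∑ i ∈ S, g i :=
  calc ∑ i ∈ S, q / p * f i = q * (1 / p * ∑ i ∈ S, f i) := by rw [← Finset.mul_sum]; ring
    _ ≤ q * (1 / q * ∑ i ∈ S, g i) := by gcongr
    _ = ∑ i ∈ S, g i := by field_simp

theorem stmt8_general {ι κ 𝕜 : Type*} [Fintype ι] [DecidableEq ι] [Preorder ι]
    [LocallyFiniteOrderBot ι] [Fintype κ] [DecidableEq κ] [Nonempty κ] [RCLike 𝕜]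
    {U : Matrix ι κ 𝕜} (hU : Uᴴ * U = 1) {P γ B : ℝ} (hP : 0 < P) (hγ : 0 ≤ γ) (hB : 0 < B)
    {E : ι → ℝ}
    (hcausal : ∀ t, 1 / P * ∑ l ∈ Finset.Iic t, sourceVariance P U l ≤
      1 / B * ∑ l ∈ Finset.Iic t, E l) :
    (∀ t, ∑ l ∈ Finset.Iic t, B / P * sourceVariance P U l ≤ ∑ l ∈ Finset.Iic t, E l) ∧
    ∑ l, B / P * sourceVariance P U l = B ∧
    (∀ a : ι → ℝ, (∀ t, 0 ≤ a t) → ∑ l, a l * sourceVariance P U l ≤ B →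
      (posteriorPrecision (Fintype.card κ / P) γ U fun _ => B / P)⁻¹.trace ≤
        (posteriorPrecision (Fintype.card κ / P) γ U a)⁻¹.trace) ∧
    (posteriorPrecision (Fintype.card κ / P) γ U fun _ => B / P)⁻¹.trace =
      ((P / (1 + γ * B / Fintype.card κ) : ℝ) : 𝕜) := by
  have hs : (0 : ℝ) < Fintype.card κ := Nat.cast_pos.mpr Fintype.card_pos
  refine ⟨fun t => sum_div_mul_le_sum hB (hcausal t), ?_, fun a ha hspent => ?_, ?_⟩
  · rw [← Finset.mul_sum, sum_sourceVariance hU, div_mul_cancel₀ B hP.ne']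
  · rw [sum_mul_sourceVariance, div_mul_eq_mul_div, div_le_iff₀ hs] at hspent
    refine trace_inv_posteriorPrecision_const_le hU (div_pos hs hP) hγ ha ?_
    rwa [div_mul_eq_mul_div, le_div_iff₀' hP]
  · rw [trace_inv_posteriorPrecision_const hU (by positivity)]
    congr 1
    field_simp

/-- paper's Corollary 2: for the flat-spectrum low-rank source
`K = (P_x/s) U U†` over a static channel, if
`(1/P_x) Σ_{l≤t} σ²_{x_l} ≤ (1/E_tot) Σ_{l≤t} E_l` for every `t`, then the
uniform allocation `a_t = E_tot/P_x` satisfies the energy causality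
constraints and minimizes the MMSE, attaining `P_x / (1 + γ E_tot/s)`. -/
theorem stmt8 (n s : ℕ) (hn : 0 < n) (hs : 0 < s) (hsn : s ≤ n)
    (U : Matrix (Fin n) (Fin s) ℂ) (hU : Uᴴ * U = 1)
    (Px γ : ℝ) (hPx : 0 < Px) (hγ : 0 < γ)
    (σx2 : Fin n → ℝ) (hσx2 : ∀ t, σx2 t = (Px / s) * ∑ k, ‖U t k‖ ^ 2)
    (E : Fin n → ℝ) (hE : ∀ t, 0 ≤ E t)
    (Etot : ℝ) (hEtot : Etot = ∑ l, E l) (hEtotpos : 0 < Etot)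
    (hcond : ∀ t : Fin n,
      (1 / Px) * ∑ l ∈ Finset.Iic t, σx2 l ≤ (1 / Etot) * ∑ l ∈ Finset.Iic t, E l) :
    (∀ t : Fin n, ∑ l ∈ Finset.Iic t, (Etot / Px) * σx2 l ≤ ∑ l ∈ Finset.Iic t, E l)
    ∧ (∑ l : Fin n, (Etot / Px) * σx2 l = Etot)
    ∧ (∀ a' : Fin n → ℝ, (∀ t, 0 ≤ a' t) →
        (∀ t : Fin n, ∑ l ∈ Finset.Iic t, a' l * σx2 l ≤ ∑ l ∈ Finset.Iic t, E l) →
        (∑ l, a' l * σx2 l = Etot) →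
        Matrix.trace
            ((((s : ℝ) / Px : ℝ) • (1 : Matrix (Fin s) (Fin s) ℂ)
                + (γ : ℂ) • (Uᴴ * Matrix.diagonal (fun _ : Fin n => ((Etot / Px : ℝ) : ℂ)) * U))⁻¹)
          ≤ Matrix.trace
              ((((s : ℝ) / Px : ℝ) • (1 : Matrix (Fin s) (Fin s) ℂ)
                  + (γ : ℂ) • (Uᴴ * Matrix.diagonal (fun t => (a' t : ℂ)) * U))⁻¹))
    ∧ Matrix.trace
          ((((s : ℝ) / Px : ℝ) • (1 : Matrix (Fin s) (Fin s) ℂ)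
              + (γ : ℂ) • (Uᴴ * Matrix.diagonal (fun _ : Fin n => ((Etot / Px : ℝ) : ℂ)) * U))⁻¹)
        = ((Px / (1 + γ * Etot / s) : ℝ) : ℂ) := by
  obtain rfl : σx2 = sourceVariance Px U := by
    ext t
    rw [hσx2, sourceVariance, Fintype.card_fin]
  have : NeZero s := ⟨hs.ne'⟩
  obtain ⟨hcausal, hspent, hoptimal, hvalue⟩ := stmt8_general hU hPx hγ.le hEtotpos hcond
  simp only [Fintype.card_fin] at hoptimal hvalue
  exact ⟨hcausal, hspent, fun a' ha' _ htot => hoptimal a' ha' htot.le, hvalue⟩
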